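/- (Diagonal shell identity from the proof of Proposition 3.3) Let S : ℕ^d → V be a family into a real vector space. For any integers m, n with 1 ≤ m ≤ n, the sum of mixed increments over the shell of sup-norm exactly m satisfies Σ_{β ∈ I_0^n, |β|_∞ = m} ΔS_β = S_{(m,…,m)} − S_{(m−1,…,m−1)}; moreover Σ_{β ∈ I_0^n, |β|_∞ = 0} ΔS_β = S_0. -/

import Mathlib

/-- The `i`-th difference operator: `(Δ_i S)_α = S_α − S_{α−e_i}` if `α_i > 0`,
and `(Δ_i S)_α = S_α` if `α_i = 0`. -/
def diffOp {d : ℕ} {V : Type*} [AddCommGroup V] [Module ℝ V]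
    (i : Fin d) (S : (Fin d → ℕ) → V) : (Fin d → ℕ) → V :=
  fun α => if α i = 0 then S α else S α - S (Function.update α i (α i - 1))

/-- The mixed difference operator `Δ = Δ_1 ∘ ⋯ ∘ Δ_d`. -/
def mixedDiff {d : ℕ} {V : Type*} [AddCommGroup V] [Module ℝ V]
    (S : (Fin d → ℕ) → V) : (Fin d → ℕ) → V :=
  (List.finRange d).foldr (fun i T => diffOp i T) S

/-!
The difference operators invert summation: for every `k`, the mixed differences over the box
`[0, k]` sum to `S k`, as one sees by telescoping one coordinate at a time. A shell of the sup norm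
is the difference of two nested cubes, so its sum is the difference of the values of `S` at their
top corners.
-/

open Finset Function

section BoxSums

variable {ι : Type*} [Fintype ι] [DecidableEq ι] {α : ι → Type*}
  [∀ i, DecidableEq (α i)] [∀ i, PartialOrder (α i)] [∀ i, LocallyFiniteOrder (α i)]
  {M : Type*} [AddCommMonoid M]

theorem apply_eq_of_mem_Icc_update {a b γ : ∀ i, α i} {i : ι} (hγ : γ ∈ Icc (update a i (b i)) b) :
    γ i = b i :=
  le_antisymm ((mem_Icc.1 hγ).2 i) (update_le_iff.1 (mem_Icc.1 hγ).1).1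

theorem sum_Icc_update_eq_sum_sum (a b : ∀ i, α i) (i : ι) (c : α i) (f : (∀ i, α i) → M) :
    ∑ β ∈ Icc (update a i c) b, f β =
      ∑ γ ∈ Icc (update a i (b i)) b, ∑ x ∈ Icc c (b i), f (update γ i x) := by
  rw [← sum_product']
  refine sum_nbij' (fun β => (update β i (b i), β i)) (fun p => update p.1 i p.2) ?_ ?_ ?_ ?_ ?_
  · intro β hβ
    obtain ⟨haβ, hβb⟩ := mem_Icc.1 hβ
    obtain ⟨hcβ, haβ⟩ := update_le_iff.1 haβ
    exact mem_product.2 ⟨mem_Icc.2 ⟨update_le_update_iff.2 ⟨le_rfl, haβ⟩,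
      update_le_iff.2 ⟨le_rfl, fun j _ => hβb j⟩⟩, mem_Icc.2 ⟨hcβ, hβb i⟩⟩
  · rintro ⟨γ, x⟩ h
    obtain ⟨hγ, hx⟩ := mem_product.1 h
    obtain ⟨haγ, hγb⟩ := mem_Icc.1 hγ
    obtain ⟨hcx, hxb⟩ := mem_Icc.1 hx
    exact mem_Icc.2 ⟨update_le_update_iff.2 ⟨hcx, (update_le_iff.1 haγ).2⟩,
      update_le_iff.2 ⟨hxb, fun j _ => hγb j⟩⟩
  · intro β _
    simp
  · rintro ⟨γ, x⟩ h
    simp [← apply_eq_of_mem_Icc_update (mem_product.1 h).1]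
  · intro β _
    simp

end BoxSums

section Shell

variable {ι : Type*} [Fintype ι]

theorem le_const_iff_sup_univ_le {α : Type*} [SemilatticeSup α] [OrderBot α] {f : ι → α} {a : α} :
    f ≤ (fun _ => a) ↔ univ.sup f ≤ a := by
  simp [Pi.le_def]

variable [DecidableEq ι]

theorem Iic_filter_sup_eq_zero (n : ι → ℕ) :
    {β ∈ Iic n | univ.sup β = 0} = Iic fun _ => 0 := by
  ext β
  simp only [mem_filter, mem_Iic, le_const_iff_sup_univ_le, Nat.le_zero, and_iff_right_iff_imp]
  exact fun h => (le_const_iff_sup_univ_le.2 h.le).trans fun j => (n j).zero_le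

theorem Iic_filter_sup_eq_succ {m : ℕ} {n : ι → ℕ} (hmn : (fun _ => m + 1) ≤ n) :
    {β ∈ Iic n | univ.sup β = m + 1} = Iic (fun _ => m + 1) \ Iic fun _ => m := by
  ext β
  have le_n : univ.sup β ≤ m + 1 → β ≤ n := fun h =>
    (le_const_iff_sup_univ_le.2 h).trans hmn
  simp only [mem_filter, mem_sdiff, mem_Iic, le_const_iff_sup_univ_le, not_le,
    Nat.lt_iff_add_one_le]
  exact ⟨fun h => ⟨h.2.le, h.2.ge⟩, fun h => ⟨le_n h.1, h.1.antisymm h.2⟩⟩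

end Shell

section Differences

variable {d : ℕ} {V : Type*} [AddCommGroup V] [Module ℝ V]

theorem diffOp_update_zero (i : Fin d) (S : (Fin d → ℕ) → V) (α : Fin d → ℕ) :
    diffOp i S (update α i 0) = S (update α i 0) := by
  simp [diffOp]

theorem diffOp_update_succ (i : Fin d) (S : (Fin d → ℕ) → V) (α : Fin d → ℕ) (k : ℕ) :
    diffOp i S (update α i (k + 1)) = S (update α i (k + 1)) - S (update α i k) := by
  simp [diffOp]

theorem sum_range_diffOp_update (i : Fin d) (S : (Fin d → ℕ) → V) (α : Fin d → ℕ) (k : ℕ) :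
    ∑ x ∈ range (k + 1), diffOp i S (update α i x) = S (update α i k) := by
  simp only [sum_range_succ', diffOp_update_zero, diffOp_update_succ,
    sum_range_sub fun x => S (update α i x), sub_add_cancel]

theorem sum_Icc_update_zero_diffOp (i : Fin d) (S : (Fin d → ℕ) → V) (a b : Fin d → ℕ) :
    ∑ β ∈ Icc (update a i 0) b, diffOp i S β = ∑ β ∈ Icc (update a i (b i)) b, S β := by
  rw [sum_Icc_update_eq_sum_sum]
  refine sum_congr rfl fun γ hγ => ?_
  rw [← Nat.range_succ_eq_Icc_zero, sum_range_diffOp_update, ← apply_eq_of_mem_Icc_update hγ,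
    update_eq_self]

-- The coordinates outside `L`, not yet differenced, are pinned to their values in `k`.
theorem sum_Icc_piecewise_foldr_diffOp (S : (Fin d → ℕ) → V) (k : Fin d → ℕ)
    {L : List (Fin d)} (hL : L.Nodup) :
    ∑ β ∈ Icc (L.toFinset.piecewise 0 k) k, L.foldr diffOp S β = S k := by
  induction L with
  | nil => rw [List.toFinset_nil, piecewise_empty, Icc_self, sum_singleton, List.foldr_nil]
  | cons i L ih =>
    obtain ⟨hi, hL⟩ := List.nodup_cons.1 hL
    have lower_eq : update (L.toFinset.piecewise 0 k) i (k i) = L.toFinset.piecewise 0 k := by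
      simp [hi]
    rw [List.toFinset_cons, piecewise_insert, List.foldr_cons, Pi.zero_apply,
      sum_Icc_update_zero_diffOp, lower_eq, ih hL]

theorem sum_Iic_mixedDiff (S : (Fin d → ℕ) → V) (k : Fin d → ℕ) :
    ∑ β ∈ Iic k, mixedDiff S β = S k := by
  have h := sum_Icc_piecewise_foldr_diffOp S k (List.nodup_finRange d)
  rwa [List.toFinset_finRange, piecewise_univ, ← bot_eq_zero, Icc_bot] at h

theorem sum_Iic_sdiff_Iic_mixedDiff (S : (Fin d → ℕ) → V) {k l : Fin d → ℕ} (hlk : l ≤ k) :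
    ∑ β ∈ Iic k \ Iic l, mixedDiff S β = S k - S l := by
  rw [sum_sdiff_eq_sub (Iic_subset_Iic.2 hlk), sum_Iic_mixedDiff, sum_Iic_mixedDiff]

theorem shell_sum_mixedDiff_general (S : (Fin d → ℕ) → V) {m : ℕ} {n : Fin d → ℕ} (hm : 1 ≤ m)
    (hmn : (fun _ => m) ≤ n) :
    (∑ β ∈ Iic n with univ.sup β = m, mixedDiff S β = S (fun _ => m) - S (fun _ => m - 1)) ∧
      (∑ β ∈ Iic n with univ.sup β = 0, mixedDiff S β = S (fun _ => 0)) := by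
  constructor
  · obtain ⟨m, rfl⟩ := Nat.exists_eq_add_of_le' hm
    rw [Iic_filter_sup_eq_succ hmn, Nat.add_sub_cancel]
    exact sum_Iic_sdiff_Iic_mixedDiff S fun _ => m.le_succ
  · rw [Iic_filter_sup_eq_zero, sum_Iic_mixedDiff]

end Differences

/-- diagonal shell identity from the proof of Proposition 3.3:
for `1 ≤ m ≤ n`, `Σ_{β ∈ I_0^n, |β|_∞ = m} ΔS_β = S_{(m,…,m)} − S_{(m−1,…,m−1)}`;
moreover `Σ_{β ∈ I_0^n, |β|_∞ = 0} ΔS_β = S_0`.  Here `|β|_∞ = max_i β_i` is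
`Finset.univ.sup β`. -/
theorem shell_sum_mixedDiff {d : ℕ} (hd : 1 ≤ d)
    {V : Type*} [AddCommGroup V] [Module ℝ V]
    (S : (Fin d → ℕ) → V) (m n : ℕ) (hm : 1 ≤ m) (hmn : m ≤ n) :
    (∑ β ∈ (Finset.Iic ((fun _ => n) : Fin d → ℕ)).filter
        (fun β => Finset.univ.sup β = m), mixedDiff S β
      = S (fun _ => m) - S (fun _ => m - 1)) ∧
    (∑ β ∈ (Finset.Iic ((fun _ => n) : Fin d → ℕ)).filter
        (fun β => Finset.univ.sup β = 0), mixedDiff S β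
      = S (fun _ => 0)) :=
  shell_sum_mixedDiff_general S hm fun _ => hmn
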